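/- Let Δ be a connected graph on the vertex set {0,…,n}. Then ℓ(Δ) ≤ n, and ℓ(Δ) = n if and only if Δ is a tree. Moreover, if Δ is connected and not a tree, then the sets A(Δ) and W(Δ) produced by the recursive procedure do not depend on the choices of free vertices made. -/

import Mathlib

/-- An abstract simplicial complex on the vertex set `{0, …, n}`. -/
structure SComplex (n : ℕ) where
  faces : Set (Finset (Fin (n + 1)))
  down_closed : ∀ {s t : Finset (Fin (n + 1))}, s ∈ faces → t ⊆ s → t ∈ faces

/-- A simplicial complex is a graph if it is (at most) 1-dimensional. -/
def SComplex.IsGraph {n : ℕ} (Δ : SComplex n) : Prop :=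
  ∀ s ∈ Δ.faces, s.card ≤ 2

/-- The simple graph underlying a 1-dimensional simplicial complex on `{0, …, n}`:
`i` and `j` are adjacent iff `{i, j}` is an edge of the complex. -/
def SComplex.graph {n : ℕ} (Δ : SComplex n) : SimpleGraph (Fin (n + 1)) :=
  SimpleGraph.fromRel fun i j => ({i, j} : Finset (Fin (n + 1))) ∈ Δ.faces

/-- `v` is a free vertex of the subcomplex of `Δ` induced on `W`: it belongs to exactly one
edge of the induced subcomplex. -/
def FreeVertexIn {n : ℕ} (Δ : SComplex n) (W : Finset (Fin (n + 1))) (v : Fin (n + 1)) :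
    Prop :=
  v ∈ W ∧ ∃! e : Finset (Fin (n + 1)), e ∈ Δ.faces ∧ e ⊆ W ∧ e.card = 2 ∧ v ∈ e

/-- `l` is a collapse sequence for `Δ` starting from the vertex subset `W`. -/
def IsCollapseSeq {n : ℕ} (Δ : SComplex n) : Finset (Fin (n + 1)) → List (Fin (n + 1)) → Prop
  | _, [] => True
  | W, v :: l => FreeVertexIn Δ W v ∧ IsCollapseSeq Δ (W.erase v) l

/-- A collapse sequence is maximal (a run of the recursive procedure) if after performing it
no free vertex remains.  For such a run `l` starting from all of `{0, …, n}`, the outputs of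
the procedure are `ℓ(Δ) = l.length`, `A(Δ) = l.toFinset` and `W(Δ) = univ \ l.toFinset`. -/
def IsMaximalCollapseSeq {n : ℕ} (Δ : SComplex n) (W : Finset (Fin (n + 1)))
    (l : List (Fin (n + 1))) : Prop :=
  IsCollapseSeq Δ W l ∧ ∀ v, ¬ FreeVertexIn Δ (W \ l.toFinset) v


open Classical in
noncomputable def nbrIn {n : ℕ} (G : SimpleGraph (Fin (n + 1))) (W : Finset (Fin (n + 1)))
    (v : Fin (n + 1)) : Finset (Fin (n + 1)) := W.filter (fun u => G.Adj v u)

theorem mem_nbrIn {n : ℕ} (G : SimpleGraph (Fin (n + 1))) (W : Finset (Fin (n + 1)))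
    (v u : Fin (n + 1)) : u ∈ nbrIn G W v ↔ u ∈ W ∧ G.Adj v u := by
  simp [nbrIn]

theorem graph_adj {n : ℕ} (Δ : SComplex n) (i j : Fin (n + 1)) :
    Δ.graph.Adj i j ↔ i ≠ j ∧ ({i, j} : Finset (Fin (n + 1))) ∈ Δ.faces := by
  simp [SComplex.graph, SimpleGraph.fromRel_adj, Finset.pair_comm j i]

theorem free_iff {n : ℕ} (Δ : SComplex n) (W : Finset (Fin (n + 1))) (v : Fin (n + 1)) :
    FreeVertexIn Δ W v ↔ v ∈ W ∧ ∃ u, nbrIn Δ.graph W v = {u} := by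
  unfold FreeVertexIn
  refine and_congr_right fun hv => ?_
  constructor
  · rintro ⟨e, ⟨he, heW, hc, hve⟩, huniq⟩
    obtain ⟨a, b, hab, rfl⟩ := Finset.card_eq_two.1 hc
    have key : ∀ u, v ≠ u → ({v, u} : Finset (Fin (n + 1))) = {a, b} → nbrIn Δ.graph W v = {u} := by
      intro u hvu hu
      ext w
      rw [mem_nbrIn, graph_adj, Finset.mem_singleton]
      constructor
      · rintro ⟨hw, hne, hf⟩
        have := huniq {v, w} ⟨hf, by simp [Finset.insert_subset_iff, hv, hw],
          Finset.card_pair hne, by simp⟩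
        rw [← hu] at this
        have h2 : w ∈ ({v, u} : Finset (Fin (n + 1))) := this ▸ (by simp)
        simp only [Finset.mem_insert, Finset.mem_singleton] at h2
        rcases h2 with h2 | h2
        · exact absurd h2.symm hne
        · exact h2
      · rintro rfl
        refine ⟨heW (hu ▸ (by simp)), hvu, hu ▸ he⟩
    simp only [Finset.mem_insert, Finset.mem_singleton] at hve
    rcases hve with rfl | rfl
    · exact ⟨b, key b hab rfl⟩
    · exact ⟨a, key a hab.symm (Finset.pair_comm _ _)⟩
  · rintro ⟨u, hu⟩
    have h1 : u ∈ nbrIn Δ.graph W v := by simp [hu]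
    rw [mem_nbrIn, graph_adj] at h1
    obtain ⟨huW, hne, hf⟩ := h1
    refine ⟨{v, u}, ⟨hf, by simp [Finset.insert_subset_iff, hv, huW],
          Finset.card_pair hne, by simp⟩, ?_⟩
    rintro e ⟨he, heW, hc, hve⟩
    obtain ⟨w, hw⟩ : ∃ w, e.erase v = {w} := by
      rw [← Finset.card_eq_one, Finset.card_erase_of_mem hve, hc]
    have hwe : w ∈ e.erase v := by simp [hw]
    have he' : e = {v, w} := by rw [← Finset.insert_erase hve, hw]
    have : w ∈ nbrIn Δ.graph W v := by
      rw [mem_nbrIn, graph_adj]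
      exact ⟨heW (Finset.mem_of_mem_erase hwe), (Finset.ne_of_mem_erase hwe).symm, he' ▸ he⟩
    rw [hu, Finset.mem_singleton] at this
    rw [he', this]

/-- cut-connectedness of the induced graph -/
def CutConn {n : ℕ} (G : SimpleGraph (Fin (n + 1))) (W : Finset (Fin (n + 1))) : Prop :=
  ∀ S ⊆ W, S.Nonempty → S ≠ W → ∃ a ∈ S, ∃ b ∈ W, b ∉ S ∧ G.Adj a b

theorem cutConn_erase {n : ℕ} (G : SimpleGraph (Fin (n + 1))) (W : Finset (Fin (n + 1)))
    (v u : Fin (n + 1)) (hv : v ∈ W) (hu : nbrIn G W v = {u}) (h : CutConn G W) :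
    CutConn G (W.erase v) := by
  have hN : ∀ w, w ∈ W → G.Adj v w → w = u := fun w hw ha => by
    have : w ∈ nbrIn G W v := (mem_nbrIn ..).2 ⟨hw, ha⟩
    simpa [hu] using this
  intro S hS hne hSW
  have hvS : v ∉ S := fun h => by simpa using hS h
  have hSW' : S ⊆ W := hS.trans (Finset.erase_subset _ _)
  by_cases huS : u ∈ S
  · obtain ⟨a, ha, b, hb, hbS, hab⟩ := h (insert v S) (Finset.insert_subset hv hSW') (by simp)
      (fun h => hSW (by rw [← h, Finset.erase_insert hvS]))
    simp only [Finset.mem_insert, not_or] at ha hbS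
    rcases ha with rfl | ha
    · exact absurd (hN b hb hab ▸ huS) hbS.2
    · exact ⟨a, ha, b, Finset.mem_erase.2 ⟨hbS.1, hb⟩, hbS.2, hab⟩
  · obtain ⟨a, ha, b, hb, hbS, hab⟩ := h S hSW' hne (fun h => hvS (h ▸ hv))
    refine ⟨a, ha, b, Finset.mem_erase.2 ⟨?_, hb⟩, hbS, hab⟩
    rintro rfl
    exact huS (hN a (hSW' ha) hab.symm ▸ ha)

theorem cutConn_univ {n : ℕ} (G : SimpleGraph (Fin (n + 1))) (h : G.Connected) :
    CutConn G Finset.univ := by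
  intro S _ ⟨a, ha⟩ hS
  obtain ⟨b, hb⟩ : ∃ b, b ∉ S := by
    by_contra! hc
    exact hS (Finset.eq_univ_iff_forall.2 hc)
  obtain ⟨p⟩ := h.preconnected a b
  obtain ⟨d, -, h1, h2⟩ := p.exists_boundary_dart (S : Set (Fin (n + 1))) (by simpa) (by simpa)
  exact ⟨d.fst, by simpa using h1, d.snd, by simp, by simpa using h2, d.adj⟩

noncomputable def degSum {n : ℕ} (G : SimpleGraph (Fin (n + 1))) (W : Finset (Fin (n + 1))) : ℕ :=
  ∑ v ∈ W, (nbrIn G W v).card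

theorem degSum_erase {n : ℕ} (G : SimpleGraph (Fin (n + 1))) (W : Finset (Fin (n + 1)))
    (v u : Fin (n + 1)) (hv : v ∈ W) (hu : nbrIn G W v = {u}) :
    degSum G W = degSum G (W.erase v) + 2 := by
  have huN : u ∈ nbrIn G W v := by simp [hu]
  rw [mem_nbrIn] at huN
  have huW : u ∈ W.erase v := Finset.mem_erase.2 ⟨huN.2.ne', huN.1⟩
  have h1 : ∀ w ∈ W.erase v,
      (nbrIn G W w).card = (nbrIn G (W.erase v) w).card + if w = u then 1 else 0 := by
    intro w hw
    have hwW := Finset.mem_of_mem_erase hw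
    have he : nbrIn G (W.erase v) w = (nbrIn G W w).erase v := by
      ext x; simp [mem_nbrIn, and_assoc]
    rw [he]
    split_ifs with hwu
    · subst hwu
      rw [Finset.card_erase_add_one]
      exact (mem_nbrIn ..).2 ⟨hv, huN.2.symm⟩
    · rw [Finset.erase_eq_of_notMem, add_zero]
      intro hc
      have : w ∈ nbrIn G W v := (mem_nbrIn ..).2 ⟨hwW, ((mem_nbrIn ..).1 hc).2.symm⟩
      rw [hu, Finset.mem_singleton] at this
      exact hwu this
  unfold degSum
  rw [← Finset.add_sum_erase W _ hv, Finset.sum_congr rfl h1, Finset.sum_add_distrib, hu]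
  simp only [Finset.sum_ite_eq', huW, if_true, Finset.card_singleton]
  omega

theorem seq_inv {n : ℕ} (Δ : SComplex n) (l : List (Fin (n + 1))) :
    ∀ W : Finset (Fin (n + 1)), IsCollapseSeq Δ W l → W.Nonempty → CutConn Δ.graph W →
      (W \ l.toFinset).Nonempty ∧ CutConn Δ.graph (W \ l.toFinset) ∧
      (W \ l.toFinset).card + l.length = W.card ∧
      degSum Δ.graph W = degSum Δ.graph (W \ l.toFinset) + 2 * l.length := by
  induction l with
  | nil => intro W _ h1 h2; simp [h1, h2]
  | cons v l ih =>
    intro W h h1 h2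
    obtain ⟨hf, hs⟩ := h
    obtain ⟨hv, u, hu⟩ := (free_iff ..).1 hf
    have huN : u ∈ nbrIn Δ.graph W v := by simp [hu]
    rw [mem_nbrIn] at huN
    have huW : u ∈ W.erase v := Finset.mem_erase.2 ⟨huN.2.ne', huN.1⟩
    have := ih _ hs ⟨u, huW⟩ (cutConn_erase _ _ _ _ hv hu h2)
    have he : W \ (v :: l).toFinset = W.erase v \ l.toFinset := by
      ext x; simp; tauto
    rw [he]
    refine ⟨this.1, this.2.1, ?_, ?_⟩
    · have h3 := this.2.2.1
      have h4 := Finset.card_erase_add_one hv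
      simp only [List.length_cons]; omega
    · have h3 := this.2.2.2
      have h4 := degSum_erase _ _ _ _ hv hu
      simp only [List.length_cons]; omega

theorem core_subset {n : ℕ} (Δ : SComplex n) (C : Finset (Fin (n + 1)))
    (hC : ∀ v ∈ C, 2 ≤ (nbrIn Δ.graph C v).card) (l : List (Fin (n + 1))) :
    ∀ W : Finset (Fin (n + 1)), IsCollapseSeq Δ W l → C ⊆ W → C ⊆ W \ l.toFinset := by
  induction l with
  | nil => intro W _ h; simpa using h
  | cons v l ih =>
    intro W h hCW
    obtain ⟨hf, hs⟩ := h
    obtain ⟨hv, u, hu⟩ := (free_iff ..).1 hf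
    have he : W \ (v :: l).toFinset = W.erase v \ l.toFinset := by
      ext x; simp; tauto
    rw [he]
    refine ih _ hs fun x hx => Finset.mem_erase.2 ⟨?_, hCW hx⟩
    rintro rfl
    have h1 := hC x hx
    have h2 : nbrIn Δ.graph C x ⊆ nbrIn Δ.graph W x := by
      intro y; simp only [mem_nbrIn]; exact fun h => ⟨hCW h.1, h.2⟩
    have := Finset.card_le_card h2
    rw [hu, Finset.card_singleton] at this
    omega

theorem min_deg {n : ℕ} (Δ : SComplex n) (W : Finset (Fin (n + 1)))
    (hW : CutConn Δ.graph W) (hc : 2 ≤ W.card) (hf : ∀ v, ¬ FreeVertexIn Δ W v) :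
    ∀ v ∈ W, 2 ≤ (nbrIn Δ.graph W v).card := by
  intro v hv
  have h1 : (nbrIn Δ.graph W v).card ≠ 1 := fun h =>
    hf v ((free_iff ..).2 ⟨hv, Finset.card_eq_one.1 h⟩)
  obtain ⟨a, ha, b, hb, -, hab⟩ := hW {v} (by simpa) (by simp) (by rintro rfl; simp at hc)
  rw [Finset.mem_singleton] at ha
  subst ha
  have : 0 < (nbrIn Δ.graph W a).card := Finset.card_pos.2 ⟨b, (mem_nbrIn ..).2 ⟨hb, hab⟩⟩
  omega

open Classical in
theorem degSum_univ {n : ℕ} (G : SimpleGraph (Fin (n + 1))) :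
    degSum G Finset.univ = 2 * G.edgeFinset.card := by
  rw [← SimpleGraph.sum_degrees_eq_twice_card_edges]
  refine Finset.sum_congr rfl fun v _ => ?_
  rw [← SimpleGraph.card_neighborFinset_eq_degree]
  congr 1
  ext u
  simp [mem_nbrIn]

theorem isTree_iff_degSum {n : ℕ} (G : SimpleGraph (Fin (n + 1))) (h : G.Connected) :
    G.IsTree ↔ degSum G Finset.univ = 2 * n := by
  classical
  rw [SimpleGraph.isTree_iff_connected_and_card, degSum_univ, Nat.card_eq_fintype_card,
    Nat.card_eq_fintype_card, ← SimpleGraph.edgeFinset_card, Fintype.card_fin]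
  constructor
  · rintro ⟨-, h⟩; omega
  · intro h'; exact ⟨h, by omega⟩

/-- **Statement 12.** For a connected graph `Δ` on `{0, …, n}`: `ℓ(Δ) ≤ n`, with equality iff
`Δ` is a tree; moreover if `Δ` is not a tree then the sets `A(Δ)` (deleted vertices) and
`W(Δ)` (remaining vertices) do not depend on the choices of free vertices. -/
theorem collapse_length_le_and_tree_iff {n : ℕ} (Δ : SComplex n) (hΔ : Δ.IsGraph)
    (hvert : ∀ i : Fin (n + 1), ({i} : Finset (Fin (n + 1))) ∈ Δ.faces)
    (hconn : Δ.graph.Connected)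
    (l : List (Fin (n + 1))) (hl : IsMaximalCollapseSeq Δ Finset.univ l) :
    l.length ≤ n ∧
      (l.length = n ↔ Δ.graph.IsTree) ∧
      (¬ Δ.graph.IsTree → ∀ l' : List (Fin (n + 1)), IsMaximalCollapseSeq Δ Finset.univ l' →
        l'.toFinset = l.toFinset ∧ Finset.univ \ l'.toFinset = Finset.univ \ l.toFinset) := by
  obtain ⟨hs, hm⟩ := hl
  have hcu := cutConn_univ _ hconn
  obtain ⟨h1, h2, h3, h4⟩ := seq_inv Δ l _ hs Finset.univ_nonempty hcu
  have hcard : (Finset.univ : Finset (Fin (n + 1))).card = n + 1 := by simp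
  have h1' := Finset.card_pos.2 h1
  have hiff : l.length = n ↔ Δ.graph.IsTree := by
    rw [isTree_iff_degSum _ hconn]
    constructor
    · intro hn
      have hc1 : (Finset.univ \ l.toFinset).card = 1 := by omega
      obtain ⟨w, hw⟩ := Finset.card_eq_one.1 hc1
      have : degSum Δ.graph (Finset.univ \ l.toFinset) = 0 := by
        rw [hw]
        simp [degSum, nbrIn]
      omega
    · intro ht
      by_contra hne
      have hmd := min_deg Δ _ h2 (by omega) hm
      have := Finset.card_nsmul_le_sum _ _ 2 hmd
      change _ ≤ degSum Δ.graph (Finset.univ \ l.toFinset) at this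
      rw [smul_eq_mul] at this
      omega
  refine ⟨by omega, hiff, ?_⟩
  intro hnt l' hl'
  obtain ⟨hs', hm'⟩ := hl'
  obtain ⟨k1, k2, k3, k4⟩ := seq_inv Δ l' _ hs' Finset.univ_nonempty hcu
  have hne : l.length ≠ n := fun h => hnt (hiff.1 h)
  have hd := min_deg Δ _ h2 (by omega) hm
  have hsub := core_subset Δ _ hd l' _ hs' (Finset.subset_univ _)
  have hle := Finset.card_le_card hsub
  have hd' := min_deg Δ _ k2 (by omega) hm'
  have hsub' := core_subset Δ _ hd' l _ hs (Finset.subset_univ _)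
  have heq := Finset.Subset.antisymm hsub' hsub
  refine ⟨?_, heq⟩
  ext x
  have := Finset.ext_iff.1 heq x
  simp only [Finset.mem_sdiff, Finset.mem_univ, true_and] at this
  exact not_iff_not.1 this
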